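/- arXiv:2406.10852 — 2 statements merged into one kernel-verified Lean document; each statement's English description precedes it below -/
import Mathlib

section
/- GradPath preserves dummy coordinates: if the representation map f̃ is dummy in coordinate i, then every GradPath iterate has the same i-th coordinate as the explicand, i.e. (p_j)ᵢ = xᵢ for all 0 ≤ j ≤ k, regardless of the reference x^r and of the step scalars η₀, …, η_{k−1}. -/
/-- If `g` is dummy in coordinate `i`, it is constant along the line `t ↦ z + t • eᵢ`, so its
line derivative in the direction `eᵢ`, which is the `i`-th coordinate of the gradient, is zero. -/
lemma gradient_apply_eq_zero_of_dummy {n : ℕ} {g : EuclideanSpace ℝ (Fin n) → ℝ}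
    (hg : Differentiable ℝ g) (i : Fin n)
    (hdummy : ∀ u v : EuclideanSpace ℝ (Fin n), (∀ l, l ≠ i → u l = v l) → g u = g v)
    (z : EuclideanSpace ℝ (Fin n)) : gradient g z i = 0 := by
  have hcoord : gradient g z i = fderiv ℝ g z (EuclideanSpace.single i 1) := by
    rw [← InnerProductSpace.toDual_symm_apply (𝕜 := ℝ), EuclideanSpace.inner_single_right]
    simp [gradient]
  have hconst : (fun t : ℝ => g (z + t • EuclideanSpace.single i 1)) = fun _ => g z := by
    funext t
    refine hdummy _ _ fun l hl => ?_
    simp [hl]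
  rw [hcoord, ← (hg z).lineDeriv_eq_fderiv, lineDeriv, hconst, deriv_const]

/-- GradPath preserves dummy coordinates: if the representation map `f̃` is
dummy in coordinate `i`, then every GradPath iterate has the same `i`-th
coordinate as the explicand. -/
theorem gradpath_preserves_dummy_coord (n m k : ℕ)
    (ftilde : EuclideanSpace ℝ (Fin n) → EuclideanSpace ℝ (Fin m))
    (hdiff : Differentiable ℝ ftilde) (i : Fin n)
    (hdummy : ∀ u v : EuclideanSpace ℝ (Fin n),
      (∀ l, l ≠ i → u l = v l) → ftilde u = ftilde v)
    (xr x : EuclideanSpace ℝ (Fin n)) (η : Fin k → ℝ)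
    (p : ℕ → EuclideanSpace ℝ (Fin n)) (hp0 : p 0 = x)
    (hstep : ∀ j : Fin k, p (j + 1)
      = p j - η j • gradient (fun z => ‖ftilde z - ftilde xr‖ ^ 2) (p j)) :
    ∀ j ≤ k, p j i = x i := by
  have hgrad : ∀ z, gradient (fun z => ‖ftilde z - ftilde xr‖ ^ 2) z i = 0 :=
    gradient_apply_eq_zero_of_dummy ((hdiff.sub_const _).norm_sq ℝ) i
      fun u v huv => by rw [hdummy u v huv]
  intro j
  induction j with
  | zero => intro _; rw [hp0]
  | succ j ih =>
    intro hj
    have h := hstep ⟨j, hj⟩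
    simp only at h
    rw [h, PiLp.sub_apply, PiLp.smul_apply, hgrad, smul_zero, sub_zero]
    exact ih (by omega)
end

section
/- Dummy axiom for IG² (representation version): if the representation map f̃ is dummy in coordinate i, then the IG² attribution of feature i vanishes, φᵢ = ∑_{j=0}^{k−1} ∂ᵢf(p_j) · ∂ᵢg(p_j) · η_j = 0, for every differentiable model output f : ℝⁿ → ℝ, every reference x^r, and all step scalars η₀, …, η_{k−1}. -/
/-- A differentiable function that is dummy in coordinate `i` has zero `i`-th partial derivative,
because its restriction to every line in direction `e_i` is constant. -/
theorem fderiv_single_eq_zero_of_dummy {n : ℕ} {h : EuclideanSpace ℝ (Fin n) → ℝ}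
    (hh : Differentiable ℝ h) (i : Fin n)
    (hdummy : ∀ u v : EuclideanSpace ℝ (Fin n), (∀ l, l ≠ i → u l = v l) → h u = h v)
    (z : EuclideanSpace ℝ (Fin n)) :
    fderiv ℝ h z (EuclideanSpace.single i 1) = 0 := by
  rw [← (hh z).lineDeriv_eq_fderiv, lineDeriv]
  have hconst : (fun t : ℝ => h (z + t • EuclideanSpace.single i (1 : ℝ))) = fun _ => h z := by
    funext t
    refine hdummy _ _ fun l hl => ?_
    simp [hl]
  rw [hconst, deriv_const]

/-- Dummy axiom for IG² (representation version): if the representation map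
`f̃` is dummy in coordinate `i`, then the IG² attribution of feature `i`
vanishes for every differentiable model output `f`. -/
theorem ig2_dummy_axiom_representation (n m k : ℕ)
    (ftilde : EuclideanSpace ℝ (Fin n) → EuclideanSpace ℝ (Fin m))
    (hdiff : Differentiable ℝ ftilde) (i : Fin n)
    (hdummy : ∀ u v : EuclideanSpace ℝ (Fin n),
      (∀ l, l ≠ i → u l = v l) → ftilde u = ftilde v)
    (f : EuclideanSpace ℝ (Fin n) → ℝ) (hf : Differentiable ℝ f)
    (xr x : EuclideanSpace ℝ (Fin n)) (η : Fin k → ℝ)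
    (p : ℕ → EuclideanSpace ℝ (Fin n)) (hp0 : p 0 = x)
    (hstep : ∀ j : Fin k, p (j + 1)
      = p j - η j • gradient (fun z => ‖ftilde z - ftilde xr‖ ^ 2) (p j)) :
    ∑ j : Fin k,
        fderiv ℝ f (p j) (EuclideanSpace.single i 1)
          * fderiv ℝ (fun z => ‖ftilde z - ftilde xr‖ ^ 2) (p j)
              (EuclideanSpace.single i 1)
          * η j
      = 0 := by
  refine Finset.sum_eq_zero fun j _ => ?_
  rw [fderiv_single_eq_zero_of_dummy ((hdiff.sub_const _).norm_sq ℝ) i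
    (fun u v huv => by rw [hdummy u v huv]), mul_zero, zero_mul]
end
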